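/- Two-dimensional late-time Duhamel estimate: fix 2 < r < ∞ and set q = 2r/(r−2). For any t > 0, any measurable interval I ⊆ [t/2, t], and any measurable u : I × ℝ² → ℂ, one has ‖ ∫_I e^{i(t−s)Δ} (|u|²u)(s) ds ‖_{L^r_x(ℝ²)} ≤ C t^{−2(1/2−1/r)} ( sup_{s ∈ I} s^{2(1/2−1/r)} ‖u(s)‖_{L^r_x(ℝ²)} ) ‖u‖²_{L^{r,2}_s L^q_x(I×ℝ²)}, with C depending only on r. -/

import Mathlib

open MeasureTheory Set
open scoped ENNReal Real

noncomputable section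

/-- The free Schrödinger propagator `e^{itΔ}` acting on functions on a `d`-dimensional space:
for `t ≠ 0`, `(e^{itΔ}f)(x) = (4πit)^{-d/2} ∫ e^{i|x-y|²/(4t)} f(y) dy`, and `e^{i0Δ}f = f`. -/
def schrod {E : Type*} [NormedAddCommGroup E] [MeasureSpace E] (d : ℕ) (t : ℝ) (f : E → ℂ) :
    E → ℂ :=
  if t = 0 then f
  else fun x =>
    (4 * (Real.pi : ℂ) * Complex.I * (t : ℂ)) ^ (-(d : ℂ) / 2) *
      ∫ y, Complex.exp (Complex.I * ((‖x - y‖ ^ 2 : ℝ) : ℂ) / (4 * (t : ℂ))) * f y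

/-- Mixed Lebesgue norm `‖u‖_{L^p_t L^q_x (I × space)}`. -/
def mixedNorm {α : Type*} [MeasurableSpace α] (ν : Measure α) (I : Set ℝ) (p q : ℝ≥0∞)
    (u : ℝ → α → ℂ) : ℝ≥0∞ :=
  if p = ∞ then essSup (fun t => eLpNorm (u t) q ν) (volume.restrict I)
  else (∫⁻ t in I, eLpNorm (u t) q ν ^ p.toReal) ^ (1 / p.toReal)

/-- Lorentz quasinorm `p^{1/q} ‖ λ · ν({g > λ})^{1/p} ‖_{L^q((0,∞), dλ/λ)}`
for an `ℝ≥0∞`-valued function `g`. -/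
def lorentzNorm {α : Type*} [MeasurableSpace α] (ν : Measure α) (p q : ℝ≥0∞)
    (g : α → ℝ≥0∞) : ℝ≥0∞ :=
  if q = ∞ then
    ⨆ l ∈ Set.Ioi (0 : ℝ), ENNReal.ofReal l * ν {x | ENNReal.ofReal l < g x} ^ p⁻¹.toReal
  else
    (p * ∫⁻ l in Set.Ioi (0 : ℝ),
        (ENNReal.ofReal l * ν {x | ENNReal.ofReal l < g x} ^ p⁻¹.toReal) ^ q.toReal /
          ENNReal.ofReal l) ^ q⁻¹.toReal

/-- Lorentz quasinorm `‖f‖_{L^{p,q}}` of a scalar function. -/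
def lorentzNormC {α : Type*} [MeasurableSpace α] (ν : Measure α) (p q : ℝ≥0∞)
    (f : α → ℂ) : ℝ≥0∞ :=
  lorentzNorm ν p q fun x => (‖f x‖₊ : ℝ≥0∞)

/-- Lorentz-in-time mixed norm `‖u‖_{L^{p,q}_t L^r_x (I × space)}`. -/
def lorentzMixedNorm {α : Type*} [MeasurableSpace α] (ν : Measure α) (I : Set ℝ)
    (p q r : ℝ≥0∞) (u : ℝ → α → ℂ) : ℝ≥0∞ :=
  lorentzNorm (volume.restrict I) p q fun t => eLpNorm (u t) r ν

/-- The nonlinearity `|f|^a f`. -/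
def nonlin {E : Type*} (a : ℝ) (f : E → ℂ) : E → ℂ := fun x => ((‖f x‖ ^ a : ℝ) : ℂ) * f x

/-!
Conjugation by a Gaussian phase turns `e^{itΔ}` into a rescaled Fourier transform, so `e^{itΔ}` is
an isometry of `L²` and maps `L¹` to `L^∞` with norm at most `(4π|t|)^{-d/2}`. Real interpolation
between the two gives `‖e^{itΔ}f‖_r ≤ K |t|^{-a} ‖f‖_{r'}` with `a = d(1/2 - 1/r)`. By Minkowski's
and Hölder's inequalities the Duhamel integral is then at most
`K sup_{s ∈ I} ‖u(s)‖_r ∫_I |t - s|^{-a} ‖u(s)‖_q^b ds`. The time weight satisfies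
`∫_S |t - s|^{-a} ds ≤ C |S|^{1-a}` for every set `S`, so by the layer-cake formula it pairs with
`‖u(s)‖_q^b` at the cost of the Lorentz quasinorm `L^{p,b}` where `b / p = 1 - a`; as `s ≥ t / 2`,
the supremum costs a factor `(t / 2)^{-a}` when the weight `s^a` is put in.
-/

lemma eLpNorm_ofReal_eq_lintegral_rpow_enorm {α G : Type*} {mα : MeasurableSpace α}
    [NormedAddCommGroup G] (f : α → G) {p : ℝ} (hp : 0 < p) (μ : Measure α) :
    eLpNorm f (ENNReal.ofReal p) μ = (∫⁻ x, ‖f x‖ₑ ^ p ∂μ) ^ p⁻¹ := by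
  rw [eLpNorm_eq_lintegral_rpow_enorm_toReal (by simpa using hp) ENNReal.ofReal_ne_top,
    ENNReal.toReal_ofReal hp.le, one_div]

section LayerCake

variable {α : Type*} {mα : MeasurableSpace α} {μ : Measure α}

lemma lintegral_Ioi_ofReal_rpow_eq_top (s : ℝ) :
    ∫⁻ l in Ioi (0 : ℝ), ENNReal.ofReal (l ^ s) = ∞ := by
  by_contra h
  refine not_integrableOn_Ioi_rpow s ⟨by fun_prop, (hasFiniteIntegral_iff_ofReal ?_).2
    (lt_top_iff_ne_top.2 h)⟩
  exact ae_restrict_of_forall_mem measurableSet_Ioi fun l hl => Real.rpow_nonneg (le_of_lt hl) s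

lemma lintegral_enn_rpow_eq_lintegral_meas_lt {g : α → ℝ≥0∞} (hg : AEMeasurable g μ) {s : ℝ}
    (hs : 0 < s) :
    ∫⁻ x, g x ^ s ∂μ = ENNReal.ofReal s *
      ∫⁻ l in Ioi (0 : ℝ), μ {x | ENNReal.ofReal l < g x} * ENNReal.ofReal (l ^ (s - 1)) := by
  by_cases hfin : μ {x | g x = ∞} = 0
  · have hlt : ∀ᵐ x ∂μ, g x ≠ ∞ := ae_iff.2 (by simpa using hfin)
    have h := lintegral_rpow_eq_lintegral_meas_lt_mul μ
      (ae_of_all _ fun x => ENNReal.toReal_nonneg (a := g x)) hg.ennreal_toReal hs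
    calc ∫⁻ x, g x ^ s ∂μ = ∫⁻ x, ENNReal.ofReal ((g x).toReal ^ s) ∂μ := by
          refine lintegral_congr_ae (hlt.mono fun x hx => ?_)
          simp only [← ENNReal.ofReal_rpow_of_nonneg ENNReal.toReal_nonneg hs.le,
            ENNReal.ofReal_toReal hx]
      _ = _ := by
          rw [h]
          congr 1
          refine setLIntegral_congr_fun measurableSet_Ioi fun l hl => ?_
          have hset : μ {x | l < (g x).toReal} = μ {x | ENNReal.ofReal l < g x} :=
            measure_congr (hlt.mono fun x hx => propext
              (ENNReal.ofReal_lt_iff_lt_toReal (le_of_lt hl) hx).symm)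
          simp only [hset]
  · have hpos : ∀ l : ℝ, μ {x | g x = ∞} ≤ μ {x | ENNReal.ofReal l < g x} := fun l =>
      measure_mono fun x (hx : g x = ∞) => show _ < g x from hx ▸ ENNReal.ofReal_lt_top
    rw [lintegral_eq_top_of_measure_eq_top_ne_zero (hg.pow_const s), eq_comm]
    · refine ENNReal.mul_eq_top.2 (.inl ⟨by simpa using hs, top_unique ?_⟩)
      calc ∞ = ∫⁻ l in Ioi (0 : ℝ), μ {x | g x = ∞} * ENNReal.ofReal (l ^ (s - 1)) := by
            rw [lintegral_const_mul _ (by fun_prop), lintegral_Ioi_ofReal_rpow_eq_top,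
              ENNReal.mul_top hfin]
        _ ≤ _ := lintegral_mono fun l => mul_le_mul' (hpos l) le_rfl
    · simpa [ENNReal.rpow_eq_top_iff, hs, hs.not_gt] using hfin

end LayerCake

section MinkowskiIntegral

variable {α β : Type*} {mα : MeasurableSpace α} {mβ : MeasurableSpace β}
  {μ : Measure α} {ν : Measure β}

lemma rpow_one_sub_mul_rpow_le (x : ℝ≥0∞) {p : ℝ} (hp : 1 < p) : x ^ (1 - p) * x ^ p ≤ x := by
  rcases eq_or_ne x 0 with rfl | h0
  · simp [ENNReal.zero_rpow_of_pos (zero_lt_one.trans hp)]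
  rcases eq_or_ne x ∞ with rfl | htop
  · simp
  rw [← ENNReal.rpow_add _ _ h0 htop, sub_add_cancel, ENNReal.rpow_one]

lemma rpow_lintegral_le_mul_lintegral_rpow {f w : α → ℝ≥0∞} (hf : AEMeasurable f μ)
    (hw : AEMeasurable w μ) {p : ℝ} (hp : 1 < p) (hzero : ∀ᵐ s ∂μ, w s = 0 → f s = 0)
    (htop : ∀ᵐ s ∂μ, w s ≠ ∞) :
    (∫⁻ s, f s ∂μ) ^ p ≤ (∫⁻ s, w s ∂μ) ^ (p - 1) * ∫⁻ s, w s ^ (1 - p) * f s ^ p ∂μ := by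
  have hp0 : 0 < p := zero_lt_one.trans hp
  have hq0 : 0 < (p - 1) / p := div_pos (sub_pos.2 hp) hp0
  have hconj : p.HolderConjugate ((p - 1) / p)⁻¹ := by
    rw [inv_div]
    exact .conjExponent hp
  have hsplit : ∀ᵐ s ∂μ, f s = w s ^ (-((p - 1) / p)) * f s * w s ^ ((p - 1) / p) := by
    filter_upwards [hzero, htop] with s h0 hs
    rcases eq_or_ne (w s) 0 with hws | hws
    · simp [h0 hws]
    · rw [mul_right_comm, ← ENNReal.rpow_add _ _ hws hs, neg_add_cancel, ENNReal.rpow_zero, one_mul]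
  have hholder := ENNReal.lintegral_mul_le_Lp_mul_Lq μ hconj
    ((hw.pow_const (-((p - 1) / p))).mul hf) (hw.pow_const ((p - 1) / p))
  calc (∫⁻ s, f s ∂μ) ^ p
      ≤ ((∫⁻ s, (w s ^ (-((p - 1) / p)) * f s) ^ p ∂μ) ^ (1 / p) *
          (∫⁻ s, (w s ^ ((p - 1) / p)) ^ ((p - 1) / p)⁻¹ ∂μ) ^ (1 / ((p - 1) / p)⁻¹)) ^ p := by
        gcongr
        exact (lintegral_congr_ae hsplit).trans_le hholder
    _ = (∫⁻ s, w s ∂μ) ^ (p - 1) * ∫⁻ s, w s ^ (1 - p) * f s ^ p ∂μ := by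
        simp only [ENNReal.mul_rpow_of_nonneg _ _ hp0.le, ← ENNReal.rpow_mul, one_div, inv_inv,
          mul_inv_cancel₀ hq0.ne', inv_mul_cancel₀ hp0.ne', ENNReal.rpow_one,
          div_mul_cancel₀ _ hp0.ne', neg_mul, neg_sub]
        exact mul_comm _ _

variable [SFinite μ] [SFinite ν]

lemma ae_ae_eq_zero_of_lintegral_eq_zero {F : α → β → ℝ≥0∞}
    (hF : Measurable (Function.uncurry F)) :
    ∀ᵐ x ∂ν, ∀ᵐ s ∂μ, ∫⁻ y, F s y ∂ν = 0 → F s x = 0 := by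
  have hmeas : MeasurableSet {z : α × β | ∫⁻ y, F z.1 y ∂ν = 0 → F z.1 z.2 = 0} :=
    (measurableSet_eq_fun (hF.lintegral_prod_right'.comp measurable_fst) measurable_const).imp
      (measurableSet_eq_fun hF measurable_const)
  refine (Measure.ae_ae_comm hmeas).1 (ae_of_all _ fun s => ?_)
  by_cases hs : ∫⁻ y, F s y ∂ν = 0
  · exact ((lintegral_eq_zero_iff hF.of_uncurry_left).1 hs).mono fun x hx _ => hx
  · simp [hs]

lemma lintegral_rpow_lintegral_le {F : α → β → ℝ≥0∞} (hF : Measurable (Function.uncurry F))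
    {p : ℝ} (hp : 1 ≤ p) :
    (∫⁻ x, (∫⁻ s, F s x ∂μ) ^ p ∂ν) ^ (1 / p) ≤ ∫⁻ s, (∫⁻ x, F s x ^ p ∂ν) ^ (1 / p) ∂μ := by
  rcases hp.eq_or_lt with rfl | hp1
  · simpa using (lintegral_lintegral_swap hF.aemeasurable).ge
  have hp0 : 0 < p := zero_lt_one.trans hp1
  have hF' : Measurable fun z : α × β => F z.1 z.2 := hF
  set N : α → ℝ≥0∞ := fun s => (∫⁻ x, F s x ^ p ∂ν) ^ (1 / p) with hN
  have hNp (s : α) : N s ^ p = ∫⁻ x, F s x ^ p ∂ν := by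
    rw [hN, one_div, ENNReal.rpow_inv_rpow hp0.ne']
  have hNm : Measurable N := (hF'.pow_const p).lintegral_prod_right'.pow_const _
  rcases eq_or_ne (∫⁻ s, N s ∂μ) ∞ with htop | htop
  · exact htop ▸ le_top
  have hN0 : ∀ᵐ x ∂ν, ∀ᵐ s ∂μ, N s = 0 → F s x = 0 := by
    simpa only [← hNp, ENNReal.rpow_eq_zero_iff_of_pos hp0] using
      ae_ae_eq_zero_of_lintegral_eq_zero (μ := μ) (ν := ν)
        (F := fun s x => F s x ^ p) (hF'.pow_const p)
  rw [one_div, ENNReal.rpow_inv_le_iff hp0]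
  -- Hölder with the weight `N s = ‖F s‖_p`, for which the double integral collapses by Tonelli.
  calc ∫⁻ x, (∫⁻ s, F s x ∂μ) ^ p ∂ν
      ≤ ∫⁻ x, (∫⁻ s, N s ∂μ) ^ (p - 1) * ∫⁻ s, N s ^ (1 - p) * F s x ^ p ∂μ ∂ν :=
        lintegral_mono_ae <| hN0.mono fun x hx => rpow_lintegral_le_mul_lintegral_rpow
          hF.of_uncurry_right.aemeasurable hNm.aemeasurable hp1 hx
          ((ae_lt_top hNm htop).mono fun _ => ne_of_lt)
    _ = (∫⁻ s, N s ∂μ) ^ (p - 1) * ∫⁻ s, N s ^ (1 - p) * N s ^ p ∂μ := by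
        rw [lintegral_const_mul' _ _ (ENNReal.rpow_ne_top_of_nonneg (sub_nonneg.2 hp) htop),
          lintegral_lintegral_swap (by fun_prop)]
        congr 1
        refine lintegral_congr fun s => ?_
        rw [lintegral_const_mul _ (hF.of_uncurry_left.pow_const p), hNp]
    _ ≤ (∫⁻ s, N s ∂μ) ^ (p - 1) * ∫⁻ s, N s ∂μ := by
        gcongr with s
        exact rpow_one_sub_mul_rpow_le _ hp1
    _ = (∫⁻ s, N s ∂μ) ^ p := by
        conv_lhs => rw [← ENNReal.rpow_one (∫⁻ s, N s ∂μ), ← ENNReal.rpow_mul,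
          ← ENNReal.rpow_add_of_nonneg _ _ (by linarith) zero_le_one]
        simp

lemma eLpNorm_integral_le_lintegral_eLpNorm {G : Type*} [NormedAddCommGroup G] [NormedSpace ℝ G]
    [MeasurableSpace G] [OpensMeasurableSpace G] {f : α → β → G}
    (hf : Measurable (Function.uncurry f)) {p : ℝ≥0∞} (hp : 1 ≤ p) (hp' : p ≠ ∞) :
    eLpNorm (fun x => ∫ s, f s x ∂μ) p ν ≤ ∫⁻ s, eLpNorm (f s) p ν ∂μ := by
  have hp0 : p ≠ 0 := (zero_lt_one.trans_le hp).ne'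
  simp only [eLpNorm_eq_lintegral_rpow_enorm_toReal hp0 hp']
  calc (∫⁻ x, ‖∫ s, f s x ∂μ‖ₑ ^ p.toReal ∂ν) ^ (1 / p.toReal)
      ≤ (∫⁻ x, (∫⁻ s, ‖f s x‖ₑ ∂μ) ^ p.toReal ∂ν) ^ (1 / p.toReal) := by
        gcongr with x
        exact enorm_integral_le_lintegral_enorm _
    _ ≤ _ := lintegral_rpow_lintegral_le hf.enorm (by simpa using ENNReal.toReal_mono hp' hp)

end MinkowskiIntegral

section Interpolation

variable {α β : Type*} {mα : MeasurableSpace α} {mβ : MeasurableSpace β}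
  {μ : Measure α} {ν : Measure β}

lemma measurable_meas_ofReal_lt (μ : Measure α) (g : α → ℝ≥0∞) :
    Measurable fun l : ℝ => μ {x | ENNReal.ofReal l < g x} :=
  Antitone.measurable fun _ _ hl => measure_mono fun _ hx =>
    (ENNReal.ofReal_le_ofReal hl).trans_lt hx

lemma eLpNorm_indicator_eq_eLpNorm_restrict_of_nullMeasurableSet {E : Type*} [NormedAddCommGroup E]
    {f : α → E} {S : Set α} (hS : NullMeasurableSet S μ) (p : ℝ≥0∞) :
    eLpNorm (S.indicator f) p μ = eLpNorm f p (μ.restrict S) := by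
  obtain ⟨S', hS', hSS'⟩ := hS
  rw [eLpNorm_congr_ae (indicator_ae_eq_of_ae_eq_set hSS'), Measure.restrict_congr_set hSS',
    eLpNorm_indicator_eq_eLpNorm_restrict hS']

lemma mul_setLIntegral_div_rpow_le {φ : α → ℝ≥0∞} (hφ : AEMeasurable φ μ) {r : ℝ} (hr : 1 < r)
    (hN : ∫⁻ x, φ x ^ (r / (r - 1)) ∂μ ≠ ∞) (c : ℝ≥0∞) {l : ℝ≥0∞} (hl0 : l ≠ 0) (hl : l ≠ ∞) :
    c * ∫⁻ x in {x | l < c * (∫⁻ y, φ y ^ (r / (r - 1)) ∂μ) / φ x ^ (r - 1)⁻¹}ᶜ, φ x ∂μ ≤ l := by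
  have hr1 : 0 < r - 1 := sub_pos.2 hr
  have hexp : r / (r - 1) = 1 + (r - 1)⁻¹ := by
    field_simp
    ring
  set N := ∫⁻ y, φ y ^ (r / (r - 1)) ∂μ with hNdef
  set S := {x | l < c * N / φ x ^ (r - 1)⁻¹}
  rcases eq_or_ne N 0 with hN0 | hN0
  · have hφ0 : φ =ᵐ[μ] 0 := by
      rw [hNdef, lintegral_eq_zero_iff' (hφ.pow_const _)] at hN0
      exact hN0.mono fun x hx => (ENNReal.rpow_eq_zero_iff_of_pos (by positivity)).1 hx
    simp [lintegral_congr_ae (ae_restrict_of_ae hφ0)]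
  refine (ENNReal.mul_le_mul_iff_left hN0 hN).1 ?_
  calc c * (∫⁻ x in Sᶜ, φ x ∂μ) * N = ∫⁻ x in Sᶜ, c * N * φ x ∂μ := by
        rw [lintegral_const_mul'' _ hφ.restrict, mul_right_comm]
    _ ≤ ∫⁻ x in Sᶜ, l * φ x ^ (r / (r - 1)) ∂μ := by
        refine setLIntegral_mono_ae ((hφ.pow_const _).const_mul l).restrict
          (ae_of_all _ fun x hx => ?_)
        have hx' : c * N ≤ l * φ x ^ (r - 1)⁻¹ :=
          (ENNReal.div_le_iff_le_mul (.inr hl) (.inr hl0)).1 (not_lt.1 hx)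
        calc c * N * φ x ≤ l * φ x ^ (r - 1)⁻¹ * φ x := by gcongr
          _ = l * φ x ^ (r / (r - 1)) := by
            rw [hexp, add_comm, ENNReal.rpow_add_of_nonneg _ _ (inv_nonneg.2 hr1.le) zero_le_one,
              ENNReal.rpow_one, mul_assoc]
    _ ≤ ∫⁻ x, l * φ x ^ (r / (r - 1)) ∂μ := setLIntegral_le_lintegral _ _
    _ = l * N := lintegral_const_mul'' _ (hφ.pow_const _)

lemma rpow_two_mul_div_rpow_le (c φ : ℝ≥0∞) {r : ℝ} (hr : 2 < r) :
    φ ^ (2 : ℝ) * (c / φ ^ (r - 1)⁻¹) ^ (r - 2) ≤ c ^ (r - 2) * φ ^ (r / (r - 1)) := by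
  have hr1 : 0 < r - 1 := by linarith
  have hr2 : 0 < r - 2 := sub_pos.2 hr
  rcases eq_or_ne φ 0 with rfl | h0
  · simp [ENNReal.zero_rpow_of_pos two_pos]
  rcases eq_or_ne φ ∞ with rfl | htop
  · simp [ENNReal.top_rpow_of_pos, hr1, hr2]
  rw [ENNReal.div_rpow_of_nonneg _ _ hr2.le, div_eq_mul_inv, ← ENNReal.rpow_mul,
    ← ENNReal.rpow_neg, mul_left_comm, ← ENNReal.rpow_add _ _ h0 htop]
  apply le_of_eq
  congr 2
  field_simp
  ring

lemma lintegral_div_rpow_withDensity_le {φ : α → ℝ≥0∞} (hφ : AEMeasurable φ μ) (c : ℝ≥0∞) {r : ℝ}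
    (hr : 2 < r) :
    ∫⁻ x, (c / φ x ^ (r - 1)⁻¹) ^ (r - 2) ∂μ.withDensity (fun x => φ x ^ (2 : ℝ)) ≤
      c ^ (r - 2) * ∫⁻ x, φ x ^ (r / (r - 1)) ∂μ := by
  rw [lintegral_withDensity_eq_lintegral_mul₀ (hφ.pow_const _)
    (((hφ.pow_const _).const_div c).pow_const _), ← lintegral_const_mul'' _ (hφ.pow_const _)]
  exact lintegral_mono fun x => rpow_two_mul_div_rpow_le _ _ hr

variable {E F : Type*} [NormedAddCommGroup E] [NormedAddCommGroup F] {T : (α → E) → β → F}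
  {A B : ℝ≥0∞}

lemma meas_lt_enorm_le_of_integrable
    (hadd : ∀ f g, Integrable f μ → Integrable g μ → ∀ x, ‖T (f + g) x‖ₑ ≤ ‖T f x‖ₑ + ‖T g x‖ₑ)
    (hmeas : ∀ f, Integrable f μ → AEStronglyMeasurable (T f) ν)
    (hA : ∀ f, Integrable f μ → eLpNorm (T f) ∞ ν ≤ A * eLpNorm f 1 μ)
    (hB : ∀ f, Integrable f μ → eLpNorm (T f) 2 ν ≤ B * eLpNorm f 2 μ)
    {f : α → E} (hf : Integrable f μ) {S : Set α} (hS : NullMeasurableSet S μ) {l : ℝ≥0∞}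
    (hl0 : l ≠ 0) (hl : l ≠ ∞) (hSl : 2 * A * ∫⁻ x in Sᶜ, ‖f x‖ₑ ∂μ ≤ l) :
    ν {x | l < ‖T f x‖ₑ} ≤ 4 * B ^ (2 : ℝ) * (l ^ (-2 : ℝ) * ∫⁻ x in S, ‖f x‖ₑ ^ (2 : ℝ) ∂μ) := by
  have hsmall : ∀ᵐ x ∂ν, ‖T (Sᶜ.indicator f) x‖ₑ ≤ l / 2 := by
    have hle : eLpNorm (T (Sᶜ.indicator f)) ∞ ν ≤ l / 2 := by
      refine (hA _ (hf.indicator₀ hS.compl)).trans ?_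
      rw [eLpNorm_indicator_eq_eLpNorm_restrict_of_nullMeasurableSet hS.compl,
        eLpNorm_one_eq_lintegral_enorm, ENNReal.le_div_iff_mul_le (by simp) (by simp)]
      rwa [mul_comm, ← mul_assoc]
    exact (ae_le_eLpNormEssSup (f := T (Sᶜ.indicator f))).mono fun x hx =>
      hx.trans (eLpNorm_exponent_top.symm.trans_le hle)
  have hl2 : l / 2 ≠ 0 := by simpa using hl0
  calc ν {x | l < ‖T f x‖ₑ} ≤ ν {x | l / 2 ≤ ‖T (S.indicator f) x‖ₑ} := by
        refine measure_mono_ae (hsmall.mono fun x hx (hlx : l < _) => ?_)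
        have hsplit := hadd _ _ (hf.indicator₀ hS) (hf.indicator₀ hS.compl) x
        rw [indicator_self_add_compl] at hsplit
        by_contra hlt
        exact (hlx.trans_le hsplit).not_ge
          ((add_le_add (le_of_lt (not_le.1 hlt)) hx).trans_eq (ENNReal.add_halves l))
    _ ≤ (l / 2)⁻¹ ^ (2 : ℝ) * eLpNorm (T (S.indicator f)) 2 ν ^ (2 : ℝ) := by
        simpa using meas_ge_le_mul_pow_eLpNorm_enorm ν two_ne_zero ENNReal.ofNat_ne_top
          (hmeas _ (hf.indicator₀ hS)) hl2 (by simp [ENNReal.div_eq_top, hl])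
    _ ≤ (l / 2)⁻¹ ^ (2 : ℝ) * (B * eLpNorm (S.indicator f) 2 μ) ^ (2 : ℝ) := by
        gcongr
        exact hB _ (hf.indicator₀ hS)
    _ = _ := by
        rw [eLpNorm_indicator_eq_eLpNorm_restrict_of_nullMeasurableSet hS,
          eLpNorm_eq_lintegral_rpow_enorm_toReal two_ne_zero ENNReal.ofNat_ne_top,
          ENNReal.mul_rpow_of_nonneg _ _ zero_le_two, ← ENNReal.rpow_mul, ENNReal.toReal_ofNat,
          ENNReal.inv_div (by simp) (by simp), ENNReal.div_rpow_of_nonneg _ _ zero_le_two,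
          div_eq_mul_inv, ← ENNReal.rpow_neg]
        norm_num
        ring

-- Off this level set `‖f‖` has integral at most `l / (2A)`, so `T` maps that part below `l / 2`.
lemma meas_lt_enorm_le_withDensity
    (hadd : ∀ f g, Integrable f μ → Integrable g μ → ∀ x, ‖T (f + g) x‖ₑ ≤ ‖T f x‖ₑ + ‖T g x‖ₑ)
    (hmeas : ∀ f, Integrable f μ → AEStronglyMeasurable (T f) ν)
    (hA : ∀ f, Integrable f μ → eLpNorm (T f) ∞ ν ≤ A * eLpNorm f 1 μ)
    (hB : ∀ f, Integrable f μ → eLpNorm (T f) 2 ν ≤ B * eLpNorm f 2 μ)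
    {r : ℝ} (hr : 1 < r) {f : α → E} (hf : Integrable f μ)
    (hN : ∫⁻ x, ‖f x‖ₑ ^ (r / (r - 1)) ∂μ ≠ ∞) {l : ℝ≥0∞} (hl0 : l ≠ 0) (hl : l ≠ ∞) :
    ν {x | l < ‖T f x‖ₑ} ≤ 4 * B ^ (2 : ℝ) * (l ^ (-2 : ℝ) *
      μ.withDensity (fun x => ‖f x‖ₑ ^ (2 : ℝ))
        {x | l < 2 * A * (∫⁻ y, ‖f y‖ₑ ^ (r / (r - 1)) ∂μ) / ‖f x‖ₑ ^ (r - 1)⁻¹}) := by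
  have hφ : AEMeasurable (fun x => ‖f x‖ₑ) μ := hf.1.enorm
  have hS := nullMeasurableSet_lt (aemeasurable_const (b := l))
    ((hφ.pow_const (r - 1)⁻¹).const_div (2 * A * ∫⁻ y, ‖f y‖ₑ ^ (r / (r - 1)) ∂μ))
  rw [withDensity_apply₀ _ hS]
  exact meas_lt_enorm_le_of_integrable hadd hmeas hA hB hf hS hl0 hl
    (mul_setLIntegral_div_rpow_le hφ hr hN (2 * A) hl0 hl)

lemma lintegral_enorm_rpow_le_of_eLpNorm_le
    (hadd : ∀ f g, Integrable f μ → Integrable g μ → ∀ x, ‖T (f + g) x‖ₑ ≤ ‖T f x‖ₑ + ‖T g x‖ₑ)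
    (hmeas : ∀ f, Integrable f μ → AEStronglyMeasurable (T f) ν)
    (hA : ∀ f, Integrable f μ → eLpNorm (T f) ∞ ν ≤ A * eLpNorm f 1 μ)
    (hB : ∀ f, Integrable f μ → eLpNorm (T f) 2 ν ≤ B * eLpNorm f 2 μ)
    {r : ℝ} (hr : 2 < r) {f : α → E} (hf : Integrable f μ)
    (hN : ∫⁻ x, ‖f x‖ₑ ^ (r / (r - 1)) ∂μ ≠ ∞) :
    ∫⁻ x, ‖T f x‖ₑ ^ r ∂ν ≤ ENNReal.ofReal (4 * r / (r - 2)) * B ^ (2 : ℝ) * (2 * A) ^ (r - 2) *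
      (∫⁻ x, ‖f x‖ₑ ^ (r / (r - 1)) ∂μ) ^ (r - 1) := by
  have hr0 : 0 < r := by linarith
  have hr2 : 0 < r - 2 := sub_pos.2 hr
  have hφ : AEMeasurable (fun x => ‖f x‖ₑ) μ := hf.1.enorm
  set N := ∫⁻ x, ‖f x‖ₑ ^ (r / (r - 1)) ∂μ
  set g : α → ℝ≥0∞ := fun x => 2 * A * N / ‖f x‖ₑ ^ (r - 1)⁻¹
  set κ := μ.withDensity fun x => ‖f x‖ₑ ^ (2 : ℝ)
  have hg : AEMeasurable g μ := (hφ.pow_const _).const_div _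
  have hlevel : ∀ l ∈ Ioi (0 : ℝ), ν {x | ENNReal.ofReal l < ‖T f x‖ₑ} *
      ENNReal.ofReal (l ^ (r - 1)) ≤
      4 * B ^ (2 : ℝ) * (κ {x | ENNReal.ofReal l < g x} * ENNReal.ofReal (l ^ (r - 2 - 1))) := by
    intro l hl
    refine (mul_le_mul_left (meas_lt_enorm_le_withDensity hadd hmeas hA hB (by linarith) hf hN
      (by simpa using hl) ENNReal.ofReal_ne_top) _).trans_eq ?_
    rw [show r - 2 - 1 = -2 + (r - 1) by ring, Real.rpow_add hl, ENNReal.ofReal_mul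
      (Real.rpow_nonneg (le_of_lt hl) _), ENNReal.ofReal_rpow_of_pos hl]
    ring
  have hκg : ENNReal.ofReal (r - 2) * ∫⁻ l in Ioi (0 : ℝ), κ {x | ENNReal.ofReal l < g x} *
      ENNReal.ofReal (l ^ (r - 2 - 1)) ≤ (2 * A * N) ^ (r - 2) * N := by
    rw [← lintegral_enn_rpow_eq_lintegral_meas_lt
      (hg.mono_ac (withDensity_absolutelyContinuous _ _)) hr2]
    exact lintegral_div_rpow_withDensity_le hφ _ hr
  have hconst : ENNReal.ofReal r * 4 =
      ENNReal.ofReal (4 * r / (r - 2)) * ENNReal.ofReal (r - 2) := by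
    rw [← ENNReal.ofReal_mul (by positivity), div_mul_cancel₀ _ hr2.ne', mul_comm 4,
      ENNReal.ofReal_mul hr0.le, ENNReal.ofReal_ofNat]
  rw [lintegral_enn_rpow_eq_lintegral_meas_lt (hmeas f hf).enorm hr0]
  grw [setLIntegral_mono' measurableSet_Ioi hlevel]
  rw [lintegral_const_mul _ (by exact (measurable_meas_ofReal_lt κ g).mul (by fun_prop)),
    ← mul_assoc, ← mul_assoc, hconst, mul_right_comm (ENNReal.ofReal (4 * r / (r - 2))), mul_assoc]
  grw [hκg]
  rw [ENNReal.mul_rpow_of_nonneg _ N hr2.le, show r - 1 = r - 2 + 1 by ring,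
    ENNReal.rpow_add_of_nonneg _ _ hr2.le zero_le_one, ENNReal.rpow_one]
  apply le_of_eq
  ring

lemma eLpNorm_le_of_eLpNorm_top_le_of_eLpNorm_two_le
    (hadd : ∀ f g, Integrable f μ → Integrable g μ → ∀ x, ‖T (f + g) x‖ₑ ≤ ‖T f x‖ₑ + ‖T g x‖ₑ)
    (hmeas : ∀ f, Integrable f μ → AEStronglyMeasurable (T f) ν)
    (hA : ∀ f, Integrable f μ → eLpNorm (T f) ∞ ν ≤ A * eLpNorm f 1 μ)
    (hB : ∀ f, Integrable f μ → eLpNorm (T f) 2 ν ≤ B * eLpNorm f 2 μ)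
    {r : ℝ} (hr : 2 < r) {f : α → E} (hf : Integrable f μ)
    (hfr : eLpNorm f (ENNReal.ofReal (r / (r - 1))) μ ≠ ∞) :
    eLpNorm (T f) (ENNReal.ofReal r) ν ≤ ENNReal.ofReal (4 * r / (r - 2)) ^ r⁻¹ * B ^ (2 / r) *
      (2 * A) ^ (1 - 2 / r) * eLpNorm f (ENNReal.ofReal (r / (r - 1))) μ := by
  have hr0 : 0 < r := by linarith
  have hr1 : 0 < r - 1 := by linarith
  rw [eLpNorm_ofReal_eq_lintegral_rpow_enorm _ (by positivity), inv_div] at hfr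
  rw [eLpNorm_ofReal_eq_lintegral_rpow_enorm _ hr0,
    eLpNorm_ofReal_eq_lintegral_rpow_enorm _ (by positivity), inv_div]
  have hN : ∫⁻ x, ‖f x‖ₑ ^ (r / (r - 1)) ∂μ ≠ ∞ := fun h =>
    hfr (by rw [h, ENNReal.top_rpow_of_pos (by positivity)])
  refine (ENNReal.rpow_le_rpow (lintegral_enorm_rpow_le_of_eLpNorm_le hadd hmeas hA hB hr hf hN)
    (inv_nonneg.2 hr0.le)).trans_eq ?_
  simp only [ENNReal.mul_rpow_of_nonneg _ _ (inv_nonneg.2 hr0.le), ← ENNReal.rpow_mul,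
    ← div_eq_mul_inv, sub_div, div_self hr0.ne']

end Interpolation

open scoped FourierTransform SchwartzMap

section Plancherel

variable {E G : Type*} [NormedAddCommGroup E] [InnerProductSpace ℝ E] [FiniteDimensional ℝ E]
  [MeasurableSpace E] [BorelSpace E] [NormedAddCommGroup G] [InnerProductSpace ℂ G]

lemma continuous_fourier_of_integrable {f : E → G} (hf : Integrable f) : Continuous (𝓕 f) :=
  VectorFourier.fourierIntegral_continuous Real.continuous_fourierChar
    (L := innerₗ E) continuous_inner hf

variable [CompleteSpace G]

lemma integral_smul_fourier_eq (φ : 𝓢(E, ℂ)) {f : E → G} (hf : Integrable f) :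
    ∫ x, φ x • 𝓕 f x = ∫ x, 𝓕 φ x • f x := by
  have h := VectorFourier.integral_fourierIntegral_smul_eq_flip (L := innerₗ E) (μ := volume)
    (ν := volume) Real.continuous_fourierChar continuous_inner φ.integrable hf
  rw [flip_innerₗ] at h
  rw [SchwartzMap.fourier_coe]
  exact h.symm

lemma fourier_toLp_ae_eq_fourier {f : E → G} (hf1 : Integrable f) (hf2 : MemLp f 2) :
    (𝓕 (hf2.toLp f) : Lp (α := E) G 2 volume) =ᵐ[volume] 𝓕 f := by
  refine ae_eq_of_integral_contDiff_smul_eq ((Lp.memLp _).locallyIntegrable one_le_two)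
    (continuous_fourier_of_integrable hf1).locallyIntegrable fun g hg hgs => ?_
  have hcg : HasCompactSupport fun x => (g x : ℂ) := hgs.comp_left (g := Complex.ofReal) rfl
  set φ : 𝓢(E, ℂ) := hcg.toSchwartzMap (Complex.ofRealCLM.contDiff.comp hg)
  have hsmul (h : E → G) (x : E) : g x • h x = φ x • h x :=
    (Complex.coe_smul (g x) (h x)).symm
  have hdual := congrArg (fun S => S φ) (Lp.fourier_toTemperedDistribution_eq (hf2.toLp f))
  simp only [TemperedDistribution.fourier_apply, Lp.toTemperedDistribution_apply] at hdual
  simp only [hsmul]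
  rw [← hdual, integral_smul_fourier_eq φ hf1]
  refine integral_congr_ae (hf2.coeFn_toLp.mono fun x hx => ?_)
  simp only [hx]

lemma eLpNorm_fourier_two {f : E → G} (hf1 : Integrable f) (hf2 : MemLp f 2) :
    eLpNorm (𝓕 f) 2 volume = eLpNorm f 2 volume := by
  rw [← eLpNorm_congr_ae (fourier_toLp_ae_eq_fourier hf1 hf2), ← eLpNorm_congr_ae hf2.coeFn_toLp]
  have hnorm := Lp.norm_fourier_eq (hf2.toLp f)
  rw [Lp.norm_def, Lp.norm_def] at hnorm
  exact (ENNReal.toReal_eq_toReal_iff' (Lp.eLpNorm_ne_top _) (Lp.eLpNorm_ne_top _)).1 hnorm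

end Plancherel

section Dilation

variable {E G : Type*} [NormedAddCommGroup E] [NormedSpace ℝ E] [FiniteDimensional ℝ E]
  [MeasurableSpace E] [BorelSpace E] (μ : Measure E) [μ.IsAddHaarMeasure] [NormedAddCommGroup G]

lemma eLpNorm_comp_smul (f : E → G) {c : ℝ} (hc : c ≠ 0) {p : ℝ≥0∞} (hp : p ≠ ∞) :
    eLpNorm (fun x => f (c • x)) p μ =
      ENNReal.ofReal |(c ^ Module.finrank ℝ E)⁻¹| ^ (1 / p).toReal * eLpNorm f p μ := by
  rw [← smul_eq_mul, ← eLpNorm_smul_measure_of_ne_top hp, ← Measure.map_addHaar_smul μ hc,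
    (measurableEmbedding_const_smul₀ hc).eLpNorm_map_measure]
  rfl

end Dilation

section Chirp

variable {E : Type*} [NormedAddCommGroup E]

/-- The Gaussian phase `e^{i‖x‖²/(4t)}`. Conjugating by it turns the Schrödinger propagator into a
rescaled Fourier transform. -/
def chirp (t : ℝ) (x : E) : ℂ := Complex.exp ((‖x‖ ^ 2 / (4 * t) : ℝ) * Complex.I)

lemma norm_chirp (t : ℝ) (x : E) : ‖chirp t x‖ = 1 :=
  Complex.norm_exp_ofReal_mul_I _

lemma enorm_chirp (t : ℝ) (x : E) : ‖chirp t x‖ₑ = 1 := by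
  rw [← ofReal_norm, norm_chirp, ENNReal.ofReal_one]

lemma continuous_chirp (t : ℝ) : Continuous (chirp t : E → ℂ) := by
  unfold chirp
  fun_prop

lemma chirp_neg_mul_chirp (t : ℝ) (x : E) : chirp (-t) x * chirp t x = 1 := by
  rw [chirp, chirp, ← Complex.exp_add, ← add_mul, ← Complex.ofReal_add, mul_neg, div_neg,
    neg_add_cancel, Complex.ofReal_zero, zero_mul, Complex.exp_zero]

lemma eLpNorm_chirp_mul [MeasurableSpace E] (t : ℝ) (f : E → ℂ) (p : ℝ≥0∞) (μ : Measure E) :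
    eLpNorm (fun x => chirp t x * f x) p μ = eLpNorm f p μ :=
  eLpNorm_congr_enorm_ae (ae_of_all _ fun x => by rw [enorm_mul, enorm_chirp, one_mul])

variable [MeasurableSpace E] [OpensMeasurableSpace E] {μ : Measure E}

lemma integrable_chirp_mul (t : ℝ) {f : E → ℂ} (hf : Integrable f μ) :
    Integrable (fun x => chirp t x * f x) μ :=
  hf.bdd_mul (c := 1) (continuous_chirp t).aestronglyMeasurable
    (ae_of_all _ fun x => (norm_chirp t x).le)

lemma integrable_chirp_mul_iff {f : E → ℂ} (t : ℝ) :
    Integrable (fun x => chirp t x * f x) μ ↔ Integrable f μ := by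
  refine ⟨fun h => ?_, integrable_chirp_mul t⟩
  simpa only [← mul_assoc, chirp_neg_mul_chirp, one_mul] using integrable_chirp_mul (-t) h

end Chirp

section Propagator

variable {E : Type*} [NormedAddCommGroup E] [InnerProductSpace ℝ E] [FiniteDimensional ℝ E]
  [MeasurableSpace E] [BorelSpace E] {d : ℕ} {t : ℝ}

lemma schrod_apply_eq_fourier (d : ℕ) (ht : t ≠ 0) (f : E → ℂ) (x : E) :
    schrod d t f x = (4 * (π : ℂ) * Complex.I * (t : ℂ)) ^ (-(d : ℂ) / 2) *
      (chirp t x * 𝓕 (fun y => chirp t y * f y) ((4 * π * t)⁻¹ • x)) := by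
  have hphase (y : E) : Complex.exp (Complex.I * ((‖x - y‖ ^ 2 : ℝ) : ℂ) / (4 * (t : ℂ))) * f y =
      chirp t x * (Complex.exp (((-2 * π * inner ℝ y ((4 * π * t)⁻¹ • x) : ℝ) : ℂ) * Complex.I) •
        (chirp t y * f y)) := by
    rw [chirp, chirp, smul_eq_mul, ← mul_assoc, ← mul_assoc, ← Complex.exp_add,
      ← Complex.exp_add, norm_sub_sq_real, inner_smul_right, real_inner_comm]
    have ht' : (t : ℂ) ≠ 0 := mod_cast ht
    have hπ : (π : ℂ) ≠ 0 := mod_cast Real.pi_ne_zero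
    congr 2
    push_cast
    field_simp
    ring
  rw [Real.fourier_eq', ← integral_const_mul]
  simp only [schrod, ht, if_false, hphase]

lemma enorm_schrod_apply (d : ℕ) (ht : t ≠ 0) (f : E → ℂ) (x : E) :
    ‖schrod d t f x‖ₑ = ENNReal.ofReal ((4 * π * |t|) ^ (-(d / 2 : ℝ))) *
      ‖𝓕 (fun y => chirp t y * f y) ((4 * π * t)⁻¹ • x)‖ₑ := by
  have hconst : ‖(4 * (π : ℂ) * Complex.I * (t : ℂ)) ^ (-(d : ℂ) / 2)‖ =
      (4 * π * |t|) ^ (-(d / 2 : ℝ)) := by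
    rw [show -(d : ℂ) / 2 = ((-(d / 2 : ℝ) : ℝ) : ℂ) by push_cast; ring, Complex.norm_cpow_real]
    simp [abs_of_pos Real.pi_pos]
  rw [schrod_apply_eq_fourier d ht, enorm_mul, enorm_mul, enorm_chirp, one_mul,
    ← ofReal_norm, hconst]

lemma schrod_add (d : ℕ) (t : ℝ) {f g : E → ℂ} (hf : Integrable f) (hg : Integrable g) :
    schrod d t (f + g) = schrod d t f + schrod d t g := by
  rcases eq_or_ne t 0 with rfl | ht
  · simp [schrod]
  ext x
  have hfourier := congrFun (VectorFourier.fourierIntegral_add Real.continuous_fourierChar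
    (L := innerₗ E) continuous_inner (integrable_chirp_mul t hf) (integrable_chirp_mul t hg))
    ((4 * π * t)⁻¹ • x)
  simp only [Pi.add_apply, schrod_apply_eq_fourier d ht, mul_add]
  rw [← mul_add, ← mul_add]
  congr 2

lemma aestronglyMeasurable_schrod (d : ℕ) (t : ℝ) {f : E → ℂ} (hf : Integrable f) :
    AEStronglyMeasurable (schrod d t f) := by
  rcases eq_or_ne t 0 with rfl | ht
  · simpa [schrod] using hf.1
  have hcont := continuous_fourier_of_integrable (integrable_chirp_mul t hf)
  have heq := funext (schrod_apply_eq_fourier d ht f)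
  rw [heq]
  have := continuous_chirp t (E := E)
  exact (by fun_prop : Continuous _).aestronglyMeasurable

lemma schrod_of_not_integrable (d : ℕ) (ht : t ≠ 0) {f : E → ℂ} (hf : ¬ Integrable f) :
    schrod d t f = 0 := by
  ext x
  have hx : 𝓕 (fun y => chirp t y * f y) ((4 * π * t)⁻¹ • x) = 0 := by
    rw [Real.fourier_eq]
    exact integral_undef fun h => hf <| (integrable_chirp_mul_iff t).1 <|
      (Real.fourierIntegral_convergent_iff _).1 h
  rw [schrod_apply_eq_fourier d ht, hx, mul_zero, mul_zero, Pi.zero_apply]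

lemma eLpNorm_top_schrod_le (d : ℕ) (ht : t ≠ 0) (f : E → ℂ) :
    eLpNorm (schrod d t f) ∞ volume ≤
      ENNReal.ofReal ((4 * π * |t|) ^ (-(d / 2 : ℝ))) * eLpNorm f 1 volume := by
  rw [eLpNorm_exponent_top]
  refine eLpNormEssSup_le_of_ae_enorm_bound (ae_of_all _ fun x => ?_)
  rw [enorm_schrod_apply d ht, ← eLpNorm_chirp_mul t f, eLpNorm_one_eq_lintegral_enorm,
    Real.fourier_eq]
  gcongr
  refine (enorm_integral_le_lintegral_enorm _).trans_eq (lintegral_congr fun y => ?_)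
  rw [Circle.smul_def, enorm_smul, ← ofReal_norm, Circle.norm_coe, ENNReal.ofReal_one, one_mul]

lemma eLpNorm_two_schrod (hd : Module.finrank ℝ E = d) (ht : t ≠ 0) {f : E → ℂ}
    (hf1 : Integrable f) (hf2 : MemLp f 2) :
    eLpNorm (schrod d t f) 2 volume = eLpNorm f 2 volume := by
  have hg2 : MemLp (fun y => chirp t y * f y) 2 :=
    ⟨(integrable_chirp_mul t hf1).1, (eLpNorm_chirp_mul t f 2 volume).trans_lt hf2.2⟩
  have hpos : 0 < 4 * π * |t| := by positivity
  have hjacobian : |(((4 * π * t)⁻¹) ^ d)⁻¹| = (4 * π * |t|) ^ (d : ℝ) := by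
    rw [inv_pow, inv_inv, abs_pow, abs_mul, abs_of_pos (by positivity : 0 < 4 * π),
      Real.rpow_natCast]
  calc eLpNorm (schrod d t f) 2 volume
      = eLpNorm (((4 * π * |t|) ^ (-(d / 2 : ℝ))) •
          fun x => 𝓕 (fun y => chirp t y * f y) ((4 * π * t)⁻¹ • x)) 2 volume := by
        refine eLpNorm_congr_enorm_ae (ae_of_all _ fun x => ?_)
        rw [enorm_schrod_apply d ht, Pi.smul_apply, enorm_smul,
          Real.enorm_of_nonneg (by positivity)]
    _ = ENNReal.ofReal ((4 * π * |t|) ^ (-(d / 2 : ℝ))) *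
          (ENNReal.ofReal ((4 * π * |t|) ^ (d : ℝ)) ^ (1 / 2 : ℝ) * eLpNorm f 2 volume) := by
        rw [eLpNorm_const_smul, Real.enorm_of_nonneg (by positivity),
          eLpNorm_comp_smul _ _ (by positivity) ENNReal.ofNat_ne_top, hd, hjacobian,
          eLpNorm_fourier_two (integrable_chirp_mul t hf1) hg2, eLpNorm_chirp_mul]
        simp
    _ = eLpNorm f 2 volume := by
        rw [ENNReal.ofReal_rpow_of_pos (by positivity), ← Real.rpow_mul hpos.le, ← mul_assoc,
          ← ENNReal.ofReal_mul (by positivity), ← Real.rpow_add hpos, mul_one_div,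
          neg_add_cancel, Real.rpow_zero, ENNReal.ofReal_one, one_mul]

/-- The constant of the `L^{r'} → L^r` dispersive estimate in dimension `d` obtained by
interpolation. -/
def dispersiveConst (d : ℕ) (r : ℝ) : ℝ :=
  (4 * r / (r - 2)) ^ r⁻¹ * 2 ^ (1 - 2 / r) * (4 * π) ^ (-(d * (1 / 2 - 1 / r)))

lemma dispersiveConst_pos (d : ℕ) {r : ℝ} (hr : 2 < r) : 0 < dispersiveConst d r := by
  have : 0 < r - 2 := by linarith
  unfold dispersiveConst
  positivity

lemma ofReal_dispersiveConst_mul_rpow (d : ℕ) {r τ : ℝ} (hr : 2 < r) (hτ : 0 < τ) :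
    ENNReal.ofReal (dispersiveConst d r * τ ^ (-(d * (1 / 2 - 1 / r)))) =
      ENNReal.ofReal (4 * r / (r - 2)) ^ r⁻¹ *
        (2 * ENNReal.ofReal ((4 * π * τ) ^ (-(d / 2 : ℝ)))) ^ (1 - 2 / r) := by
  have : 0 < r - 2 := by linarith
  have hθ : 0 ≤ 1 - 2 / r := sub_nonneg.2 ((div_le_one (by linarith)).2 hr.le)
  have hexp : -(d / 2 : ℝ) * (1 - 2 / r) = -(d * (1 / 2 - 1 / r)) := by ring
  rw [← ENNReal.ofReal_ofNat 2, ← ENNReal.ofReal_mul (by positivity),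
    ENNReal.ofReal_rpow_of_pos (by positivity), ENNReal.ofReal_rpow_of_nonneg (by positivity) hθ,
    ← ENNReal.ofReal_mul (by positivity), Real.mul_rpow (by positivity) (by positivity),
    ← Real.rpow_mul (by positivity), hexp, Real.mul_rpow (by positivity) hτ.le, dispersiveConst]
  ring_nf

lemma eLpNorm_schrod_le (hd : Module.finrank ℝ E = d) {r : ℝ} (hr : 2 < r) (ht : t ≠ 0)
    (f : E → ℂ) :
    eLpNorm (schrod d t f) (.ofReal r) volume ≤
      ENNReal.ofReal (dispersiveConst d r * |t| ^ (-(d * (1 / 2 - 1 / r)))) *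
        eLpNorm f (.ofReal (r / (r - 1))) volume := by
  have hconst := dispersiveConst_pos d hr
  by_cases hf : Integrable f
  swap
  · simp [schrod_of_not_integrable d ht hf]
  rcases eq_or_ne (eLpNorm f (.ofReal (r / (r - 1))) volume) ∞ with hfr | hfr
  · rw [hfr, ENNReal.mul_top (ENNReal.ofReal_pos.2 (by positivity)).ne']
    exact le_top
  have hB (g : E → ℂ) (hg : Integrable g) :
      eLpNorm (schrod d t g) 2 volume ≤ 1 * eLpNorm g 2 volume := by
    rw [one_mul]
    by_cases hg2 : eLpNorm g 2 volume = ∞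
    · exact le_top.trans_eq hg2.symm
    · exact (eLpNorm_two_schrod hd ht hg ⟨hg.1, lt_top_iff_ne_top.2 hg2⟩).le
  refine (eLpNorm_le_of_eLpNorm_top_le_of_eLpNorm_two_le (T := schrod d t)
    (A := .ofReal ((4 * π * |t|) ^ (-(d / 2 : ℝ)))) (fun g h hg hh x => ?_)
    (fun g => aestronglyMeasurable_schrod d t) (fun g _ => eLpNorm_top_schrod_le d ht g) hB hr hf
    hfr).trans_eq ?_
  · rw [schrod_add d t hg hh]
    exact enorm_add_le _ _
  · rw [ENNReal.one_rpow, mul_one, ofReal_dispersiveConst_mul_rpow d hr (abs_pos.2 ht)]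

end Propagator

section FractionalKernel

lemma lintegral_comp_abs_eq_two_mul (f : ℝ → ℝ≥0∞) :
    ∫⁻ x, f |x| = 2 * ∫⁻ x in Ioi 0, f x := by
  have hpos : ∫⁻ x in Ioi (0 : ℝ), f |x| = ∫⁻ x in Ioi 0, f x :=
    setLIntegral_congr_fun measurableSet_Ioi fun x hx => by rw [abs_of_pos hx]
  have hneg : ∫⁻ x in (Ioi (0 : ℝ))ᶜ, f |x| = ∫⁻ x in Ioi 0, f x := by
    rw [compl_Ioi, setLIntegral_congr Iio_ae_eq_Iic.symm, ← hpos,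
      ← (Measure.measurePreserving_neg volume).setLIntegral_comp_preimage_emb
        (MeasurableEquiv.neg ℝ).measurableEmbedding]
    simp
  rw [← lintegral_add_compl _ measurableSet_Ioi, hpos, hneg, two_mul]

lemma setLIntegral_Ioo_ofReal_rpow_neg {a : ℝ} (ha : a < 1) {m : ℝ} (hm : 0 ≤ m) :
    ∫⁻ x in Ioo 0 m, ENNReal.ofReal (x ^ (-a)) = ENNReal.ofReal (m ^ (1 - a) / (1 - a)) := by
  have hint : IntegrableOn (fun x : ℝ => x ^ (-a)) (Ioc 0 m) :=
    (intervalIntegral.intervalIntegrable_rpow' (by linarith)).1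
  rw [restrict_Ioo_eq_restrict_Ioc, ← ofReal_integral_eq_lintegral_ofReal hint,
    ← intervalIntegral.integral_of_le hm, integral_rpow (.inl (by linarith)), neg_add_eq_sub,
    Real.zero_rpow (by linarith), sub_zero]
  filter_upwards [ae_restrict_mem measurableSet_Ioc] with x hx using Real.rpow_nonneg hx.1.le _

lemma setLIntegral_ofReal_abs_sub_rpow_neg_le {a : ℝ} (ha0 : 0 ≤ a) (ha : a < 1) (t : ℝ)
    (s : Set ℝ) :
    ∫⁻ x in s, ENNReal.ofReal (|t - x| ^ (-a)) ≤
      ENNReal.ofReal (1 + 2 / (1 - a)) * volume s ^ (1 - a) := by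
  have ha' : 0 < 1 - a := by linarith
  rcases eq_or_ne (volume s) 0 with h0 | h0
  · simp [Measure.restrict_eq_zero.2 h0]
  rcases eq_or_ne (volume s) ∞ with htop | htop
  · rw [htop, ENNReal.top_rpow_of_pos ha',
      ENNReal.mul_top (ENNReal.ofReal_pos.2 (by positivity)).ne']
    exact le_top
  obtain ⟨m, hm0, hsm⟩ : ∃ m : ℝ, 0 < m ∧ volume s = ENNReal.ofReal m :=
    ⟨_, ENNReal.toReal_pos h0 htop, (ENNReal.ofReal_toReal htop).symm⟩
  let near : ℝ → ℝ≥0∞ := (Iio m).indicator fun x => ENNReal.ofReal (x ^ (-a))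
  have hsplit (x : ℝ) : ENNReal.ofReal (x ^ (-a)) ≤ ENNReal.ofReal (m ^ (-a)) + near x := by
    rcases lt_or_ge x m with hx | hx
    · simp only [near, indicator_of_mem (mem_Iio.2 hx), le_add_self]
    · exact (ENNReal.ofReal_le_ofReal
        (Real.rpow_le_rpow_of_nonpos hm0 hx (neg_nonpos.2 ha0))).trans le_self_add
  have hnear : ∫⁻ x, near |t - x| = 2 * ENNReal.ofReal (m ^ (1 - a) / (1 - a)) := by
    rw [lintegral_sub_left_eq_self (fun x => near |x|), lintegral_comp_abs_eq_two_mul,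
      ← setLIntegral_Ioo_ofReal_rpow_neg ha hm0.le, ← Ioi_inter_Iio,
      setLIntegral_indicator measurableSet_Iio, inter_comm]
  calc ∫⁻ x in s, ENNReal.ofReal (|t - x| ^ (-a))
      ≤ ∫⁻ x in s, (ENNReal.ofReal (m ^ (-a)) + near |t - x|) :=
        lintegral_mono fun x => hsplit _
    _ ≤ ENNReal.ofReal (m ^ (-a)) * ENNReal.ofReal m +
          2 * ENNReal.ofReal (m ^ (1 - a) / (1 - a)) := by
        rw [lintegral_add_left measurable_const, setLIntegral_const, hsm, ← hnear]
        gcongr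
        exact Measure.restrict_le_self
    _ = ENNReal.ofReal (1 + 2 / (1 - a)) * volume s ^ (1 - a) := by
        have hpow : m ^ (-a) * m = m ^ (1 - a) := by
          rw [← Real.rpow_add_one hm0.ne', neg_add_eq_sub]
        rw [hsm, ENNReal.ofReal_rpow_of_pos hm0, ← ENNReal.ofReal_mul (by positivity),
          ← ENNReal.ofReal_mul (by positivity), ← ENNReal.ofReal_ofNat 2,
          ← ENNReal.ofReal_mul zero_le_two, ← ENNReal.ofReal_add (by positivity) (by positivity),
          hpow]
        ring_nf

end FractionalKernel

section Measurability

variable {α : Type*} {mα : MeasurableSpace α}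

lemma measurable_eLpNorm_of_measurable_uncurry {β G : Type*} {mβ : MeasurableSpace β}
    [NormedAddCommGroup G] [MeasurableSpace G] [OpensMeasurableSpace G] {ν : Measure β} [SFinite ν]
    {f : α → β → G} (hf : Measurable (Function.uncurry f)) {p : ℝ≥0∞} (hp : p ≠ ∞) :
    Measurable fun a => eLpNorm (f a) p ν := by
  rcases eq_or_ne p 0 with rfl | hp0
  · simp
  simp only [eLpNorm_eq_lintegral_rpow_enorm_toReal hp0 hp]
  exact (hf.enorm.pow_const _).lintegral_prod_right'.pow_const _

lemma measurable_uncurry_nonlin {E : Type*} [MeasurableSpace E] (b : ℝ) {u : α → E → ℂ}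
    (hu : Measurable (Function.uncurry u)) :
    Measurable (Function.uncurry fun s => nonlin b (u s)) :=
  (Complex.measurable_ofReal.comp (hu.norm.pow_const b)).mul hu

lemma measurable_uncurry_schrod {E : Type*} [NormedAddCommGroup E] [MeasureSpace E]
    [BorelSpace E] [SecondCountableTopology E] [SFinite (volume : Measure E)] (d : ℕ)
    {τ : α → ℝ} (hτ : Measurable τ) {f : α → E → ℂ} (hf : Measurable (Function.uncurry f)) :
    Measurable (Function.uncurry fun a => schrod d (τ a) (f a)) := by
  have hkernel : Measurable fun z : (α × E) × E =>
      Complex.exp (Complex.I * ((‖z.1.2 - z.2‖ ^ 2 : ℝ) : ℂ) / (4 * (τ z.1.1 : ℂ))) *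
        f z.1.1 z.2 := by
    have : Measurable fun z : (α × E) × E => f z.1.1 z.2 :=
      hf.comp (measurable_fst.fst.prodMk measurable_snd)
    fun_prop
  have hcases (z : α × E) : Function.uncurry (fun a => schrod d (τ a) (f a)) z =
      if τ z.1 = 0 then Function.uncurry f z else
        (4 * (π : ℂ) * Complex.I * (τ z.1 : ℂ)) ^ (-(d : ℂ) / 2) *
          ∫ y, Complex.exp (Complex.I * ((‖z.2 - y‖ ^ 2 : ℝ) : ℂ) / (4 * (τ z.1 : ℂ))) *
            f z.1 y := by
    simp only [Function.uncurry, schrod]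
    split_ifs <;> rfl
  rw [funext hcases]
  refine Measurable.ite (measurableSet_eq_fun (by fun_prop) measurable_const) hf ?_
  exact ((by fun_prop : Measurable _).pow_const _).mul
    hkernel.stronglyMeasurable.integral_prod_right'.measurable

end Measurability

section Lorentz

variable {α : Type*} {mα : MeasurableSpace α} {κ ν : Measure α}

lemma lorentzNorm_ofReal_rpow {p q : ℝ} (hp : 0 < p) (hq : 0 < q) (g : α → ℝ≥0∞) :
    lorentzNorm ν (.ofReal p) (.ofReal q) g ^ q = ENNReal.ofReal p *
      ∫⁻ l in Ioi (0 : ℝ), ν {x | ENNReal.ofReal l < g x} ^ (q / p) *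
        ENNReal.ofReal (l ^ (q - 1)) := by
  rw [lorentzNorm, if_neg ENNReal.ofReal_ne_top, ENNReal.toReal_inv, ENNReal.toReal_inv,
    ENNReal.toReal_ofReal hp.le, ENNReal.toReal_ofReal hq.le, ENNReal.rpow_inv_rpow hq.ne']
  congr 1
  refine setLIntegral_congr_fun measurableSet_Ioi fun l (hl : 0 < l) => ?_
  rw [ENNReal.mul_rpow_of_nonneg _ _ hq.le, ← ENNReal.rpow_mul, inv_mul_eq_div,
    ENNReal.ofReal_rpow_of_pos hl, mul_comm, mul_div_assoc, ← ENNReal.ofReal_div_of_pos hl,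
    Real.rpow_sub_one hl.ne']

lemma lintegral_rpow_le_lorentzNorm_rpow {g : α → ℝ≥0∞} (hg : AEMeasurable g κ) {p q : ℝ}
    (hp : 0 < p) (hq : 0 < q) {C : ℝ≥0∞}
    (hκ : ∀ l, κ {x | l < g x} ≤ C * ν {x | l < g x} ^ (q / p)) :
    ∫⁻ x, g x ^ q ∂κ ≤
      C * ENNReal.ofReal (q / p) * lorentzNorm ν (.ofReal p) (.ofReal q) g ^ q := by
  calc ∫⁻ x, g x ^ q ∂κ
      = ENNReal.ofReal q * ∫⁻ l in Ioi (0 : ℝ), κ {x | ENNReal.ofReal l < g x} *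
          ENNReal.ofReal (l ^ (q - 1)) := lintegral_enn_rpow_eq_lintegral_meas_lt hg hq
    _ ≤ ENNReal.ofReal q * ∫⁻ l in Ioi (0 : ℝ), C * ν {x | ENNReal.ofReal l < g x} ^ (q / p) *
          ENNReal.ofReal (l ^ (q - 1)) := by
        gcongr
        exact hκ _
    _ = C * ENNReal.ofReal (q / p) * lorentzNorm ν (.ofReal p) (.ofReal q) g ^ q := by
        simp only [mul_assoc C]
        rw [lorentzNorm_ofReal_rpow hp hq, lintegral_const_mul,
          ← mul_assoc (ENNReal.ofReal (q / p)), ← ENNReal.ofReal_mul (by positivity),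
          div_mul_cancel₀ _ hp.ne', mul_left_comm]
        exact ((measurable_meas_ofReal_lt ν g).pow_const _).mul (by fun_prop)

lemma setLIntegral_abs_sub_rpow_neg_mul_rpow_le {p q : ℝ} (hq : 0 < q) (hqp : q ≤ p)
    (t : ℝ) (I : Set ℝ) {g : ℝ → ℝ≥0∞} (hg : Measurable g) :
    ∫⁻ s in I, ENNReal.ofReal (|t - s| ^ (-(1 - q / p))) * g s ^ q ≤
      ENNReal.ofReal (q / p + 2) *
        lorentzNorm (volume.restrict I) (.ofReal p) (.ofReal q) g ^ q := by
  have hp : 0 < p := hq.trans_le hqp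
  have hweight : Measurable fun s : ℝ => ENNReal.ofReal (|t - s| ^ (-(1 - q / p))) := by fun_prop
  let κ := (volume.restrict I).withDensity fun s => ENNReal.ofReal (|t - s| ^ (-(1 - q / p)))
  have hκ (l : ℝ≥0∞) : κ {s | l < g s} ≤ ENNReal.ofReal (1 + 2 / (q / p)) *
      volume.restrict I {s | l < g s} ^ (q / p) := by
    have hS : MeasurableSet {s | l < g s} := measurableSet_lt measurable_const hg
    have hkernel := setLIntegral_ofReal_abs_sub_rpow_neg_le
      (sub_nonneg.2 ((div_le_one hp).2 hqp)) (sub_lt_self 1 (by positivity)) t ({s | l < g s} ∩ I)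
    rwa [sub_sub_cancel, ← Measure.restrict_restrict hS, ← Measure.restrict_apply hS,
      ← withDensity_apply _ hS] at hkernel
  have hpair := lintegral_rpow_le_lorentzNorm_rpow hg.aemeasurable hp hq hκ
  rwa [lintegral_withDensity_eq_lintegral_mul _ hweight (hg.pow_const q),
    ← ENNReal.ofReal_mul (by positivity), add_mul, one_mul,
    div_mul_cancel₀ _ (div_pos hq hp).ne'] at hpair

end Lorentz

section Duhamel

lemma eLpNorm_nonlin_le {α : Type*} {mα : MeasurableSpace α} {μ : Measure α} {f : α → ℂ}
    (hf : AEStronglyMeasurable f μ) {b : ℝ} (hb : 0 < b) (m p s : ℝ≥0∞)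
    [ENNReal.HolderTriple m p s] :
    eLpNorm (nonlin b f) s μ ≤ eLpNorm f (m * .ofReal b) μ ^ b * eLpNorm f p μ := by
  have hpow : AEStronglyMeasurable (fun x => ((‖f x‖ ^ b : ℝ) : ℂ)) μ :=
    Complex.continuous_ofReal.comp_aestronglyMeasurable
      ((Real.continuous_rpow_const hb.le).comp_aestronglyMeasurable hf.norm)
  have hsmul : nonlin b f = (fun x => ((‖f x‖ ^ b : ℝ) : ℂ)) • f := rfl
  calc eLpNorm (nonlin b f) s μ
      ≤ eLpNorm (fun x => ((‖f x‖ ^ b : ℝ) : ℂ)) m μ * eLpNorm f p μ := by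
        rw [hsmul]
        exact eLpNorm_smul_le_mul_eLpNorm hf hpow
    _ = eLpNorm f (m * .ofReal b) μ ^ b * eLpNorm f p μ := by
        rw [← eLpNorm_norm_rpow f hb]
        congr 1
        exact eLpNorm_congr_norm_ae (ae_of_all _ fun x => Complex.norm_real _)

lemma le_ofReal_rpow_neg_mul_iSup {I : Set ℝ} {τ : ℝ} (hτ : 0 < τ) (hI : I ⊆ Ici τ) {a : ℝ}
    (ha : 0 ≤ a) (g : ℝ → ℝ≥0∞) {s : ℝ} (hs : s ∈ I) :
    g s ≤ ENNReal.ofReal (τ ^ (-a)) * ⨆ s ∈ I, ENNReal.ofReal (s ^ a) * g s := by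
  calc g s = ENNReal.ofReal (τ ^ (-a)) * (ENNReal.ofReal (τ ^ a) * g s) := by
        rw [← mul_assoc, ← ENNReal.ofReal_mul (by positivity), ← Real.rpow_add hτ,
          neg_add_cancel, Real.rpow_zero, ENNReal.ofReal_one, one_mul]
    _ ≤ ENNReal.ofReal (τ ^ (-a)) * (ENNReal.ofReal (s ^ a) * g s) := by
        gcongr
        exact hI hs
    _ ≤ ENNReal.ofReal (τ ^ (-a)) * ⨆ s ∈ I, ENNReal.ofReal (s ^ a) * g s := by
        gcongr
        exact le_iSup₂ (f := fun s _ => ENNReal.ofReal (s ^ a) * g s) s hs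

variable {E : Type*} [NormedAddCommGroup E] [InnerProductSpace ℝ E] [FiniteDimensional ℝ E]
  [MeasurableSpace E] [BorelSpace E] {d : ℕ}

lemma eLpNorm_setIntegral_schrod_le (hd : Module.finrank ℝ E = d) {r : ℝ} (hr : 2 < r) (t : ℝ)
    (I : Set ℝ) {F : ℝ → E → ℂ} (hF : Measurable (Function.uncurry F)) :
    eLpNorm (fun x => ∫ s in I, schrod d (t - s) (F s) x) (.ofReal r) volume ≤
      ENNReal.ofReal (dispersiveConst d r) *
        ∫⁻ s in I, ENNReal.ofReal (|t - s| ^ (-(d * (1 / 2 - 1 / r)))) *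
          eLpNorm (F s) (.ofReal (r / (r - 1))) volume := by
  calc eLpNorm (fun x => ∫ s in I, schrod d (t - s) (F s) x) (.ofReal r) volume
      ≤ ∫⁻ s in I, eLpNorm (schrod d (t - s) (F s)) (.ofReal r) volume :=
        eLpNorm_integral_le_lintegral_eLpNorm (measurable_uncurry_schrod d (by fun_prop) hF)
          (ENNReal.one_le_ofReal.2 (by linarith)) ENNReal.ofReal_ne_top
    _ ≤ ∫⁻ s in I, ENNReal.ofReal (dispersiveConst d r) *
          (ENNReal.ofReal (|t - s| ^ (-(d * (1 / 2 - 1 / r)))) *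
            eLpNorm (F s) (.ofReal (r / (r - 1))) volume) := by
        refine lintegral_mono_ae ?_
        filter_upwards [ae_restrict_of_ae (Measure.ae_ne volume t)] with s hs
        rw [← mul_assoc, ← ENNReal.ofReal_mul (dispersiveConst_pos d hr).le]
        exact eLpNorm_schrod_le hd hr (sub_ne_zero.2 hs.symm) (F s)
    _ = _ := lintegral_const_mul' _ _ ENNReal.ofReal_ne_top

lemma eLpNorm_nonlin_le_of_two_lt {α : Type*} {mα : MeasurableSpace α} {μ : Measure α} {f : α → ℂ}
    (hf : AEStronglyMeasurable f μ) {b : ℝ} (hb : 0 < b) {r : ℝ} (hr : 2 < r) :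
    eLpNorm (nonlin b f) (.ofReal (r / (r - 1))) μ ≤
      eLpNorm f (.ofReal (b * r / (r - 2))) μ ^ b * eLpNorm f (.ofReal r) μ := by
  have hr1 : 0 < r - 1 := by linarith
  have : 0 < r - 2 := by linarith
  have : ENNReal.HolderTriple (.ofReal (r / (r - 2))) (.ofReal r) (.ofReal (r / (r - 1))) := by
    constructor
    rw [← ENNReal.ofReal_inv_of_pos (by positivity), ← ENNReal.ofReal_inv_of_pos (by positivity),
      ← ENNReal.ofReal_inv_of_pos (by positivity),
      ← ENNReal.ofReal_add (by positivity) (by positivity)]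
    congr 1
    field_simp
    ring
  convert eLpNorm_nonlin_le hf hb (.ofReal (r / (r - 2))) (.ofReal r) (.ofReal (r / (r - 1)))
    using 4
  rw [← ENNReal.ofReal_mul (by positivity)]
  ring_nf

lemma eLpNorm_setIntegral_schrod_nonlin_le (hd : Module.finrank ℝ E = d) {r b p : ℝ} (hr : 2 < r)
    (hb : 0 < b) (hp : 0 < p) (hbp : b / p + d * (1 / 2 - 1 / r) = 1) (t : ℝ) (I : Set ℝ)
    {u : ℝ → E → ℂ} (hu : Measurable (Function.uncurry u)) {M : ℝ≥0∞}
    (hM : ∀ s ∈ I, eLpNorm (u s) (.ofReal r) volume ≤ M) :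
    eLpNorm (fun x => ∫ s in I, schrod d (t - s) (nonlin b (u s)) x) (.ofReal r) volume ≤
      ENNReal.ofReal (dispersiveConst d r * (b / p + 2)) * M *
        lorentzMixedNorm volume I (.ofReal p) (.ofReal b) (.ofReal (b * r / (r - 2))) u ^ b := by
  have hθ : 0 ≤ d * (1 / 2 - 1 / r) :=
    mul_nonneg d.cast_nonneg (sub_nonneg.2 (one_div_le_one_div_of_le two_pos hr.le))
  have hbp' : b ≤ p := (div_le_one hp).1 (by linarith)
  set g := fun s => eLpNorm (u s) (ENNReal.ofReal (b * r / (r - 2))) volume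
  have hg : Measurable g := measurable_eLpNorm_of_measurable_uncurry hu ENNReal.ofReal_ne_top
  calc _ ≤ _ := eLpNorm_setIntegral_schrod_le hd hr t I (measurable_uncurry_nonlin b hu)
    _ ≤ ENNReal.ofReal (dispersiveConst d r) * ∫⁻ s in I,
          ENNReal.ofReal (|t - s| ^ (-(1 - b / p))) * g s ^ b * M := by
        rw [eq_sub_of_add_eq' hbp]
        gcongr ENNReal.ofReal (dispersiveConst d r) * ?_
        refine setLIntegral_mono (by fun_prop) fun s hs => ?_
        grw [eLpNorm_nonlin_le_of_two_lt hu.of_uncurry_left.aestronglyMeasurable hb hr, hM s hs,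
          mul_assoc]
    _ ≤ ENNReal.ofReal (dispersiveConst d r) * (ENNReal.ofReal (b / p + 2) *
          lorentzMixedNorm volume I (.ofReal p) (.ofReal b) (.ofReal (b * r / (r - 2))) u ^ b *
          M) := by
        rw [lintegral_mul_const _ (by fun_prop)]
        gcongr
        exact setLIntegral_abs_sub_rpow_neg_mul_rpow_le hb hbp' t I hg
    _ = _ := by
        rw [ENNReal.ofReal_mul (dispersiveConst_pos d hr).le]
        ring

end Duhamel

theorem late_time_duhamel_2d_general {E : Type*} [NormedAddCommGroup E] [InnerProductSpace ℝ E]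
    [FiniteDimensional ℝ E] [MeasurableSpace E] [BorelSpace E] {d : ℕ}
    (hd : Module.finrank ℝ E = d) {r b p : ℝ} (hr : 2 < r) (hb : 0 < b) (hp : 0 < p)
    (hbp : b / p + d * (1 / 2 - 1 / r) = 1) :
    ∃ C : ℝ, 0 < C ∧
      ∀ t : ℝ, 0 < t →
        ∀ I : Set ℝ, I ⊆ Icc (t / 2) t →
          ∀ u : ℝ → E → ℂ, Measurable (Function.uncurry u) →
            eLpNorm (fun x => ∫ s in I, schrod d (t - s) (nonlin b (u s)) x)
                (ENNReal.ofReal r) volume ≤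
              ENNReal.ofReal (C * t ^ (-(d * (1 / 2 - 1 / r)))) *
                (⨆ s ∈ I, ENNReal.ofReal (s ^ (d * (1 / 2 - 1 / r))) *
                  eLpNorm (u s) (ENNReal.ofReal r) volume) *
                lorentzMixedNorm volume I (ENNReal.ofReal p) (ENNReal.ofReal b)
                    (ENNReal.ofReal (b * r / (r - 2))) u ^ b := by
  have ha : 0 ≤ d * (1 / 2 - 1 / r) :=
    mul_nonneg d.cast_nonneg (sub_nonneg.2 (one_div_le_one_div_of_le two_pos hr.le))
  set a := d * (1 / 2 - 1 / r)
  have hK := dispersiveConst_pos d hr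
  refine ⟨dispersiveConst d r * (b / p + 2) * 2 ^ a, by positivity, fun t ht I hI u hu => ?_⟩
  have hsup (s : ℝ) (hs : s ∈ I) := le_ofReal_rpow_neg_mul_iSup (half_pos ht)
    (fun s hs => (hI hs).1) ha (fun s => eLpNorm (u s) (.ofReal r) volume) hs
  refine (eLpNorm_setIntegral_schrod_nonlin_le hd hr hb hp hbp t I hu hsup).trans_eq ?_
  have hscale : (t / 2) ^ (-a) = 2 ^ a * t ^ (-a) := by
    rw [Real.div_rpow ht.le zero_le_two, Real.rpow_neg zero_le_two, div_inv_eq_mul, mul_comm]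
  rw [hscale, mul_assoc (dispersiveConst d r * _) (2 ^ a),
    ENNReal.ofReal_mul (p := dispersiveConst d r * _) (by positivity), ← mul_assoc]

/-- **Two-dimensional late-time Duhamel estimate.**  Fix `2 < r < ∞` and set `q = 2r/(r-2)`.
For any `t > 0`, any measurable interval `I ⊆ [t/2, t]`, and any measurable `u` on `I × ℝ²`,
`‖∫_I e^{i(t-s)Δ}(|u|²u)(s) ds‖_{L^r_x} ≤ C t^{-2(1/2-1/r)}
  (sup_{s∈I} s^{2(1/2-1/r)} ‖u(s)‖_{L^r_x}) ‖u‖²_{L^{r,2}_s L^q_x(I×ℝ²)}`, with `C = C(r)`. -/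
theorem late_time_duhamel_2d (r : ℝ) (hr : 2 < r) :
    ∃ C : ℝ, 0 < C ∧
      ∀ t : ℝ, 0 < t →
        ∀ I : Set ℝ, MeasurableSet I → I.OrdConnected → I ⊆ Set.Icc (t / 2) t →
          ∀ u : ℝ → EuclideanSpace ℝ (Fin 2) → ℂ, Measurable (Function.uncurry u) →
            eLpNorm (fun x => ∫ s in I, schrod 2 (t - s) (nonlin 2 (u s)) x)
                (ENNReal.ofReal r) volume ≤
              ENNReal.ofReal (C * t ^ (-(2 * (1 / 2 - 1 / r)))) *
                (⨆ s ∈ I, ENNReal.ofReal (s ^ (2 * (1 / 2 - 1 / r))) *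
                  eLpNorm (u s) (ENNReal.ofReal r) volume) *
                lorentzMixedNorm volume I (ENNReal.ofReal r) 2
                    (ENNReal.ofReal (2 * r / (r - 2))) u ^ 2 := by
  have hexp : 2 / r + (2 : ℕ) * (1 / 2 - 1 / r) = 1 := by push_cast; ring
  obtain ⟨C, hC, hbound⟩ := late_time_duhamel_2d_general
    (finrank_euclideanSpace_fin (𝕜 := ℝ) (n := 2)) hr two_pos (by linarith) hexp
  refine ⟨C, hC, fun t ht I _ _ hIt u hu => ?_⟩
  simpa only [Nat.cast_ofNat, ENNReal.ofReal_ofNat, ENNReal.rpow_ofNat] using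
    hbound t ht I hIt u hu
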